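/- Enhanced comparison inequalities (Theorem 1.1). Let (V, E, ends, α) be a finite graph with boundary condition such that the wired graph G∪α is connected, the quotient V/α has at least two elements, and G∪α is not a forest (it contains a cycle, where a self-loop or a pair of parallel edges counts as a cycle). Let p ∈ (0,1) and q > 0 with q ≠ 1. Then there exist families (ε_e)_{e∈E} ∈ [0,1]^E and (ε'_e)_{e∈E} ∈ [0,1]^E, each of which is nonzero at at least one edge, such that P_{(min(p,p')+ε_e)_{e∈E}} ≼ φ^α_{G,p,q} ≼ P_{(max(p,p')−ε'_e)_{e∈E}}. -/

import Mathlib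

open scoped Classical

noncomputable section

namespace FKPaper

variable {V E : Type*}

/-- One-step adjacency between wired vertices through an edge in `F`. -/
def Step (ends : E → Sym2 V) (α : Setoid V) (F : Set E) (x y : Quotient α) : Prop :=
  ∃ e ∈ F, Sym2.map (Quotient.mk α) (ends e) = s(x, y)

/-- Setoid of connected components of the wired multigraph with edge set `F`. -/
def connSetoid (ends : E → Sym2 V) (α : Setoid V) (F : Set E) : Setoid (Quotient α) :=
  Relation.EqvGen.setoid (Step ends α F)

/-- Connectivity in the wired multigraph with edge set `F`. -/
def Conn (ends : E → Sym2 V) (α : Setoid V) (F : Set E) (x y : Quotient α) : Prop :=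
  (connSetoid ends α F).r x y

/-- The two endpoints of `e` are joined in the wired multigraph with edge set `F`. -/
def EndsConn (ends : E → Sym2 V) (α : Setoid V) (F : Set E) (e : E) : Prop :=
  ∀ x y : V, ends e = s(x, y) → Conn ends α F (Quotient.mk α x) (Quotient.mk α y)

/-- Number of connected components `k(ω, α)`. -/
def numComponents (ends : E → Sym2 V) (α : Setoid V) (ω : E → Bool) : ℕ :=
  Nat.card (Quotient (connSetoid ends α {e | ω e = true}))

/-- `p' = p / (p + q (1 - p))`. -/
def pPrime (p q : ℝ) : ℝ := p / (p + q * (1 - p))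

/-- Total mass of a set under a weight function. -/
def massOf {ι : Type*} [Fintype ι] (w : ι → ℝ) (A : Set ι) : ℝ :=
  ∑ x ∈ Finset.univ.filter (· ∈ A), w x

/-- Normalized probability of a set under a weight function. -/
def probOf {ι : Type*} [Fintype ι] (w : ι → ℝ) (A : Set ι) : ℝ :=
  massOf w A / massOf w Set.univ

/-- FK weight of a configuration. -/
def fkWeight [Fintype E] (ends : E → Sym2 V) (α : Setoid V) (p q : ℝ) (ω : E → Bool) : ℝ :=
  p ^ (Finset.univ.filter fun e => ω e = true).card *
    (1 - p) ^ (Finset.univ.filter fun e => ω e = false).card *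
    q ^ numComponents ends α ω

/-- The FK (random cluster) probability measure `φ^α_{G,p,q}`. -/
def fkProb [Fintype E] (ends : E → Sym2 V) (α : Setoid V) (p q : ℝ)
    (A : Set (E → Bool)) : ℝ :=
  probOf (fkWeight ends α p q) A

/-- Inhomogeneous Bernoulli weight. -/
def berWeight [Fintype E] (pe : E → ℝ) (ω : E → Bool) : ℝ :=
  ∏ e, if ω e = true then pe e else 1 - pe e

/-- Inhomogeneous Bernoulli product measure `P_{(p_e)}`. -/
def berProb [Fintype E] (pe : E → ℝ) (A : Set (E → Bool)) : ℝ :=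
  probOf (berWeight pe) A

/-- Increasing sets of configurations. -/
def Increasing (A : Set (E → Bool)) : Prop :=
  ∀ ⦃ω ω' : E → Bool⦄, ω ∈ A → (∀ e, ω e ≤ ω' e) → ω' ∈ A

/-- Stochastic domination `μ ≼ ν`. -/
def StochDom [Fintype E] (μ ν : Set (E → Bool) → ℝ) : Prop :=
  ∀ A : Set (E → Bool), Increasing A → μ A ≤ ν A

/-- `Q_F(e)`: cutsets for `e` included in `F`. -/
def Cutsets (ends : E → Sym2 V) (α : Setoid V) (F : Set E) (e : E) : Set (Set E) :=
  {χ | χ ⊆ F ∧ ¬ EndsConn ends α {e' | e' ∉ χ ∧ e' ≠ e} e}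

/-!
Opening an edge `e` multiplies the FK weight by `p / (1 - p)` or by `p / (q (1 - p))`, according to
whether or not the other open edges join the endpoints of `e`. So the conditional probability that
`e` is open, given the rest, is `p` or `p'`, and both values occur: `p` on an edge of a cycle when
everything else is open, `p'` on an edge which is not a loop when everything else is closed. Hence
the conditional probabilities lie between `min p p'` and `max p p'`, and some edge has its marginal
`φ(e₀ open)` strictly above the minimum, and some edge strictly below the maximum.

A single marginal may be substituted for the extreme value: if the conditional opening
probabilities of two measures are separated by `s e` at every edge `e ≠ e₀`, and only the marginals
at `e₀` are ordered, then stochastic domination still holds. Indeed, resampling all edges but `e₀`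
with the probabilities `s` turns an increasing function into an increasing function of `ω e₀` alone,
and each resampling step can only decrease the difference of the two expectations.
-/

section Resampling

variable {E : Type*}

/-- The conditional expectation of `f` given all edges but `e`, when `e` is open with
probability `t` independently of the others. -/
def resample (t : ℝ) (e : E) (f : (E → Bool) → ℝ) (ω : E → Bool) : ℝ :=
  t * f (Function.update ω e true) + (1 - t) * f (Function.update ω e false)

/-- The conditional probability under the weight `w` that `e` is open given the state of the other
edges, minus `t`, multiplied by the total weight of the two configurations in the conditioning.
Avoiding the quotient makes it linear in `w` and meaningful for signed weights. -/
def openExcess (w : (E → Bool) → ℝ) (t : ℝ) (e : E) (ω : E → Bool) : ℝ :=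
  w (Function.update ω e true) -
    t * (w (Function.update ω e true) + w (Function.update ω e false))

lemma monotone_resample {t : ℝ} (ht : t ∈ Set.Icc (0 : ℝ) 1) (e : E) {f : (E → Bool) → ℝ}
    (hf : Monotone f) : Monotone (resample t e f) := by
  intro ω ω' h
  have hupdate (b : Bool) : f (Function.update ω e b) ≤ f (Function.update ω' e b) :=
    hf (update_le_update_iff.2 ⟨le_rfl, fun x _ => h x⟩)
  exact add_le_add (mul_le_mul_of_nonneg_left (hupdate true) ht.1)
    (mul_le_mul_of_nonneg_left (hupdate false) (sub_nonneg.2 ht.2))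

lemma dependsOn_resample (t : ℝ) (e : E) {f : (E → Bool) → ℝ} {S : Set E}
    (hf : DependsOn f S) : DependsOn (resample t e f) (S \ {e}) := by
  intro ω ω' h
  have hupdate (b : Bool) : f (Function.update ω e b) = f (Function.update ω' e b) := by
    refine hf fun x hx => ?_
    by_cases hxe : x = e
    · simp [hxe]
    · simpa [hxe] using h x ⟨hx, hxe⟩
  simp only [resample, hupdate]

variable [Fintype E]

lemma two_mul_sum_eq_sum_update (e : E) (g : (E → Bool) → ℝ) :
    2 * ∑ ω, g ω = ∑ ω, (g (Function.update ω e true) + g (Function.update ω e false)) := by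
  have hflip : Function.Involutive fun ω : E → Bool => Function.update ω e (!ω e) := fun ω => by
    simp
  rw [two_mul]
  nth_rewrite 2 [← Equiv.sum_comp hflip.toPerm g]
  rw [← Finset.sum_add_distrib]
  refine Finset.sum_congr rfl fun ω _ => ?_
  have hω := Function.update_eq_self e ω
  cases he : ω e <;> rw [he] at hω <;> simp [he, hω, add_comm]

lemma two_mul_sum_sub_sum_resample (w : (E → Bool) → ℝ) (t : ℝ) (e : E) (f : (E → Bool) → ℝ) :
    2 * (∑ ω, w ω * f ω - ∑ ω, w ω * resample t e f ω) =
      ∑ ω, openExcess w t e ω *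
        (f (Function.update ω e true) - f (Function.update ω e false)) := by
  rw [← Finset.sum_sub_distrib, two_mul_sum_eq_sum_update e]
  refine Finset.sum_congr rfl fun ω _ => ?_
  simp only [resample, openExcess, Function.update_idem]
  ring

lemma sum_mul_resample_le {w : (E → Bool) → ℝ} {t : ℝ} {e : E}
    (hw : ∀ ω, 0 ≤ openExcess w t e ω) {f : (E → Bool) → ℝ} (hf : Monotone f) :
    ∑ ω, w ω * resample t e f ω ≤ ∑ ω, w ω * f ω := by
  have hnonneg : 0 ≤ ∑ ω, openExcess w t e ω *
      (f (Function.update ω e true) - f (Function.update ω e false)) :=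
    Finset.sum_nonneg fun ω _ => mul_nonneg (hw ω)
      (sub_nonneg.2 (hf (Function.update_mono (Bool.false_le true))))
  linarith [two_mul_sum_sub_sum_resample w t e f]

lemma exists_monotone_dependsOn_compl_sum_le {w : (E → Bool) → ℝ} {s : E → ℝ} (A : Finset E)
    (hs : ∀ e ∈ A, s e ∈ Set.Icc (0 : ℝ) 1) (hw : ∀ e ∈ A, ∀ ω, 0 ≤ openExcess w (s e) e ω)
    {f : (E → Bool) → ℝ} (hf : Monotone f) :
    ∃ g : (E → Bool) → ℝ, Monotone g ∧ DependsOn g (A : Set E)ᶜ ∧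
      ∑ ω, w ω * g ω ≤ ∑ ω, w ω * f ω := by
  induction A using Finset.induction_on with
  | empty => exact ⟨f, hf, by simpa using dependsOn_univ f, le_rfl⟩
  | insert a A _ ih =>
    rw [Finset.forall_mem_insert] at hs hw
    obtain ⟨g, hg, hdep, hle⟩ := ih hs.2 hw.2
    refine ⟨resample (s a) a g, monotone_resample hs.1 a hg, ?_,
      (sum_mul_resample_le hw.1 hg).trans hle⟩
    refine (dependsOn_resample (s a) a hdep).mono fun x hx => ?_
    simp_all

end Resampling

section Domination

variable {E : Type*}

lemma monotone_indicator_of_increasing {A : Set (E → Bool)} (hA : Increasing A) :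
    Monotone (A.indicator (1 : (E → Bool) → ℝ)) := by
  intro ω ω' h
  by_cases hω : ω ∈ A
  · simp [hω, hA hω h]
  · rw [Set.indicator_of_notMem hω]
    exact Set.indicator_nonneg (fun _ _ => zero_le_one) ω'

variable [Fintype E]

lemma massOf_univ {ι : Type*} [Fintype ι] (w : ι → ℝ) : massOf w Set.univ = ∑ x, w x := by
  simp [massOf]

lemma massOf_eq_sum_mul_indicator {ι : Type*} [Fintype ι] (w : ι → ℝ) (A : Set ι) :
    massOf w A = ∑ x, w x * A.indicator 1 x := by
  simp [massOf, Finset.sum_filter, Set.indicator_apply]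

lemma probOf_sub_probOf {ι : Type*} [Fintype ι] (w w' : ι → ℝ) (A : Set ι) :
    probOf w A - probOf w' A =
      massOf (fun x => w x / massOf w Set.univ - w' x / massOf w' Set.univ) A := by
  simp only [probOf, massOf, Finset.sum_sub_distrib, Finset.sum_div]

lemma sum_openExcess (w : (E → Bool) → ℝ) (t : ℝ) (e : E) :
    ∑ ω, openExcess w t e ω = 2 * (massOf w {ω | ω e = true} - t * massOf w Set.univ) := by
  rw [massOf_eq_sum_mul_indicator, massOf_univ, mul_sub, mul_left_comm,
    two_mul_sum_eq_sum_update e, two_mul_sum_eq_sum_update e w, Finset.mul_sum,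
    ← Finset.sum_sub_distrib]
  simp [openExcess]

lemma lt_probOf_open {w : (E → Bool) → ℝ} (hw : 0 < massOf w Set.univ) {t : ℝ} {e : E}
    (hnonneg : ∀ ω, 0 ≤ openExcess w t e ω) (hpos : ∃ ω, 0 < openExcess w t e ω) :
    t < probOf w {ω | ω e = true} := by
  obtain ⟨ω, hω⟩ := hpos
  have hsum := Finset.sum_pos' (fun ω _ => hnonneg ω) ⟨ω, Finset.mem_univ ω, hω⟩
  rw [sum_openExcess] at hsum
  rw [probOf, lt_div_iff₀ hw]
  linarith

lemma probOf_open_lt {w : (E → Bool) → ℝ} (hw : 0 < massOf w Set.univ) {t : ℝ} {e : E}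
    (hnonpos : ∀ ω, openExcess w t e ω ≤ 0) (hneg : ∃ ω, openExcess w t e ω < 0) :
    probOf w {ω | ω e = true} < t := by
  obtain ⟨ω, hω⟩ := hneg
  have hsum := Finset.sum_neg' (fun ω _ => hnonpos ω) ⟨ω, Finset.mem_univ ω, hω⟩
  rw [sum_openExcess] at hsum
  rw [probOf, div_lt_iff₀ hw]
  linarith

lemma sum_mul_eq_of_dependsOn_singleton (v : (E → Bool) → ℝ) {e : E} {g : (E → Bool) → ℝ}
    (hg : DependsOn g {e}) :
    ∑ ω, v ω * g ω =
      g ⊥ * massOf v Set.univ + (g ⊤ - g ⊥) * massOf v {ω | ω e = true} := by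
  rw [massOf_univ, massOf_eq_sum_mul_indicator, Finset.mul_sum, Finset.mul_sum,
    ← Finset.sum_add_distrib]
  refine Finset.sum_congr rfl fun ω _ => ?_
  cases he : ω e
  · rw [hg (y := ⊥) (by simpa using he)]
    simp [he, mul_comm]
  · rw [hg (y := ⊤) (by simpa using he)]
    simp only [Set.indicator_of_mem (show ω ∈ {ω : E → Bool | ω e = true} from he), Pi.one_apply]
    ring

lemma sum_mul_nonneg_of_monotone {v : (E → Bool) → ℝ} {s : E → ℝ} {e₀ : E}
    (hs : ∀ e ≠ e₀, s e ∈ Set.Icc (0 : ℝ) 1) (hv : massOf v Set.univ = 0)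
    (hoff : ∀ e ≠ e₀, ∀ ω, 0 ≤ openExcess v (s e) e ω) (he₀ : 0 ≤ massOf v {ω | ω e₀ = true})
    {f : (E → Bool) → ℝ} (hf : Monotone f) : 0 ≤ ∑ ω, v ω * f ω := by
  obtain ⟨g, hg, hdep, hle⟩ := exists_monotone_dependsOn_compl_sum_le (Finset.univ.erase e₀)
    (by simpa using hs) (by simpa using hoff) hf
  rw [Finset.coe_erase, Finset.coe_univ, ← Set.compl_eq_univ_sdiff, compl_compl] at hdep
  refine le_trans ?_ hle
  rw [sum_mul_eq_of_dependsOn_singleton v hdep, hv, mul_zero, zero_add]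
  exact mul_nonneg (sub_nonneg.2 (hg bot_le)) he₀

lemma stochDom_probOf_of_openExcess {w w' : (E → Bool) → ℝ} {s : E → ℝ} {e₀ : E}
    (hw : 0 < massOf w Set.univ) (hw' : 0 < massOf w' Set.univ)
    (hs : ∀ e ≠ e₀, s e ∈ Set.Icc (0 : ℝ) 1)
    (hle : ∀ e ≠ e₀, ∀ ω, openExcess w (s e) e ω ≤ 0)
    (hge : ∀ e ≠ e₀, ∀ ω, 0 ≤ openExcess w' (s e) e ω)
    (he₀ : probOf w {ω | ω e₀ = true} ≤ probOf w' {ω | ω e₀ = true}) :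
    StochDom (probOf w) (probOf w') := by
  intro A hA
  rw [← sub_nonneg, probOf_sub_probOf] at he₀ ⊢
  rw [massOf_eq_sum_mul_indicator _ A]
  refine sum_mul_nonneg_of_monotone hs ?_ (fun e he ω => ?_) he₀
    (monotone_indicator_of_increasing hA)
  · rw [← probOf_sub_probOf, probOf, probOf, div_self hw.ne', div_self hw'.ne', sub_self]
  · have hlinear : openExcess (fun ω => w' ω / massOf w' Set.univ - w ω / massOf w Set.univ)
        (s e) e ω = openExcess w' (s e) e ω / massOf w' Set.univ -
          openExcess w (s e) e ω / massOf w Set.univ := by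
      simp only [openExcess]
      ring
    rw [hlinear]
    exact sub_nonneg.2 ((div_nonpos_of_nonpos_of_nonneg (hle e he ω) hw.le).trans
      (div_nonneg (hge e he ω) hw'.le))

lemma probOf_mem_Icc {ι : Type*} [Fintype ι] {w : ι → ℝ} (hw : ∀ x, 0 ≤ w x) (A : Set ι) :
    probOf w A ∈ Set.Icc (0 : ℝ) 1 := by
  have hA : 0 ≤ massOf w A := Finset.sum_nonneg fun x _ => hw x
  have hle : massOf w A ≤ massOf w Set.univ :=
    Finset.sum_le_sum_of_subset_of_nonneg (fun x => by simp) fun x _ _ => hw x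
  exact ⟨div_nonneg hA (hA.trans hle), div_le_one_of_le₀ hle (hA.trans hle)⟩

end Domination

section Bernoulli

variable {E : Type*} [Fintype E]

lemma massOf_berWeight_univ (s : E → ℝ) : massOf (berWeight s) Set.univ = 1 := by
  simp only [massOf_univ, berWeight]
  rw [← Fintype.prod_sum fun e (b : Bool) => if b = true then s e else 1 - s e]
  simp

lemma berWeight_update (s : E → ℝ) (e : E) (ω : E → Bool) (b : Bool) :
    berWeight s (Function.update ω e b) = (if b = true then s e else 1 - s e) *
      ∏ x ∈ Finset.univ.erase e, if ω x = true then s x else 1 - s x := by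
  rw [berWeight, ← Finset.mul_prod_erase _ _ (Finset.mem_univ e), Function.update_self]
  congr 1
  refine Finset.prod_congr rfl fun x hx => ?_
  rw [Function.update_of_ne (Finset.ne_of_mem_erase hx)]

lemma one_sub_mul_berWeight_update_true (s : E → ℝ) (e : E) (ω : E → Bool) :
    (1 - s e) * berWeight s (Function.update ω e true) =
      s e * berWeight s (Function.update ω e false) := by
  simp only [berWeight_update, if_true, Bool.false_eq_true, if_false]
  ring

lemma openExcess_berWeight (s : E → ℝ) (e : E) (ω : E → Bool) :
    openExcess (berWeight s) (s e) e ω = 0 := by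
  rw [openExcess]
  linarith [one_sub_mul_berWeight_update_true s e ω]

lemma berProb_open (s : E → ℝ) (e : E) : berProb s {ω | ω e = true} = s e := by
  have hsum := sum_openExcess (berWeight s) (s e) e
  simp only [openExcess_berWeight, Finset.sum_const_zero, massOf_berWeight_univ] at hsum
  rw [berProb, probOf, massOf_berWeight_univ]
  linarith

lemma exists_berProb_add_stochDom {w : (E → Bool) → ℝ} (hw : ∀ ω, 0 ≤ w ω)
    (hmass : 0 < massOf w Set.univ) {s : E → ℝ} (hs : ∀ e, s e ∈ Set.Icc (0 : ℝ) 1)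
    (hnonneg : ∀ e ω, 0 ≤ openExcess w (s e) e ω) (hpos : ∃ e ω, 0 < openExcess w (s e) e ω) :
    ∃ ε : E → ℝ, (∀ e, ε e ∈ Set.Icc (0 : ℝ) 1) ∧ (∃ e, ε e ≠ 0) ∧
      StochDom (berProb fun e => s e + ε e) (probOf w) := by
  obtain ⟨e₀, hpos₀⟩ := hpos
  set m := probOf w {ω | ω e₀ = true}
  have hlt : s e₀ < m := lt_probOf_open hmass (hnonneg e₀) hpos₀
  have hm : m ∈ Set.Icc (0 : ℝ) 1 := probOf_mem_Icc hw _
  refine ⟨Pi.single e₀ (m - s e₀), fun e => ?_, ⟨e₀, by simpa using (sub_pos.2 hlt).ne'⟩, ?_⟩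
  · rcases eq_or_ne e e₀ with rfl | he
    · simpa using ⟨hlt.le, by linarith [hm.2, (hs e).1]⟩
    · simp [he]
  · refine stochDom_probOf_of_openExcess (s := s) (e₀ := e₀) (by simp [massOf_berWeight_univ])
      hmass (fun e _ => hs e) (fun e he ω => le_of_eq ?_) (fun e _ => hnonneg e)
      ((berProb_open _ e₀).trans_le (by simp [m]))
    simpa [he] using openExcess_berWeight
      (fun e => s e + (Pi.single e₀ (m - s e₀) : E → ℝ) e) e ω

lemma exists_stochDom_berProb_sub {w : (E → Bool) → ℝ} (hw : ∀ ω, 0 ≤ w ω)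
    (hmass : 0 < massOf w Set.univ) {s : E → ℝ} (hs : ∀ e, s e ∈ Set.Icc (0 : ℝ) 1)
    (hnonpos : ∀ e ω, openExcess w (s e) e ω ≤ 0) (hneg : ∃ e ω, openExcess w (s e) e ω < 0) :
    ∃ ε : E → ℝ, (∀ e, ε e ∈ Set.Icc (0 : ℝ) 1) ∧ (∃ e, ε e ≠ 0) ∧
      StochDom (probOf w) (berProb fun e => s e - ε e) := by
  obtain ⟨e₀, hneg₀⟩ := hneg
  set m := probOf w {ω | ω e₀ = true}
  have hlt : m < s e₀ := probOf_open_lt hmass (hnonpos e₀) hneg₀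
  have hm : m ∈ Set.Icc (0 : ℝ) 1 := probOf_mem_Icc hw _
  refine ⟨Pi.single e₀ (s e₀ - m), fun e => ?_, ⟨e₀, by simpa using (sub_pos.2 hlt).ne'⟩, ?_⟩
  · rcases eq_or_ne e e₀ with rfl | he
    · simpa using ⟨hlt.le, by linarith [hm.1, (hs e).2]⟩
    · simp [he]
  · refine stochDom_probOf_of_openExcess (s := s) (e₀ := e₀) hmass
      (by simp [massOf_berWeight_univ]) (fun e _ => hs e) (fun e _ => hnonpos e)
      (fun e he ω => ge_of_eq ?_) (le_of_le_of_eq (by simp [m]) (berProb_open _ e₀).symm)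
    simpa [he] using openExcess_berWeight
      (fun e => s e - (Pi.single e₀ (s e₀ - m) : E → ℝ) e) e ω

end Bernoulli

section Components

/-- The finest equivalence relation coarser than `S` that identifies `x` and `y`: the kernel of the
quotient map followed by sending the class of `y` to that of `x`. -/
def mergeSetoid {X : Type*} (S : Setoid X) (x y : X) : Setoid X :=
  Setoid.ker (Function.update id (Quotient.mk S y) (Quotient.mk S x) ∘ Quotient.mk S)

lemma mergeSetoid_le_iff {X : Type*} {S T : Setoid X} {x y : X} :
    mergeSetoid S x y ≤ T ↔ S ≤ T ∧ T x y := by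
  constructor
  · refine fun h => ⟨fun a b hab => h ?_, h (Setoid.ker_def.2 ?_)⟩
    · exact congrArg (Function.update id _ _) (Quotient.sound hab)
    · simp [Function.update_apply]
  · rintro ⟨hST, hxy⟩
    let π : Quotient S → Quotient T :=
      Quotient.lift (Quotient.mk T) fun _ _ h => Quotient.sound (hST h)
    have hπ (c : Quotient S) :
        π (Function.update id (Quotient.mk S y) (Quotient.mk S x) c) = π c := by
      rcases eq_or_ne c (Quotient.mk S y) with rfl | hc
      · rw [Function.update_self]
        exact Quotient.sound hxy
      · simp [hc]
    intro a b hab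
    have hmk : π (Quotient.mk S a) = π (Quotient.mk S b) := by
      rw [← hπ, ← hπ (Quotient.mk S b)]
      exact congrArg π (Setoid.ker_def.1 hab)
    exact Quotient.exact hmk

lemma range_update_id {X : Type*} [DecidableEq X] {x y : X} (hxy : x ≠ y) :
    Set.range (Function.update id y x) = {y}ᶜ := by
  ext z
  rw [Set.mem_compl_singleton_iff]
  constructor
  · rintro ⟨w, rfl⟩
    rcases eq_or_ne w y with rfl | hw
    · simpa using hxy
    · simp [hw]
  · exact fun hz => ⟨z, Function.update_of_ne hz x id⟩

lemma card_quotient_mergeSetoid_add_one {X : Type*} {S : Setoid X} [Finite (Quotient S)] {x y : X}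
    (hxy : ¬ S x y) :
    Nat.card (Quotient (mergeSetoid S x y)) + 1 = Nat.card (Quotient S) := by
  have hne : Quotient.mk S x ≠ Quotient.mk S y := fun h => hxy (Quotient.exact h)
  rw [mergeSetoid, Nat.card_congr (Setoid.quotientKerEquivRange _),
    Quotient.mk_surjective.range_comp, range_update_id hne, Nat.card_coe_set_eq,
    ← Set.ncard_singleton (Quotient.mk S y), Set.ncard_compl_add_ncard]

variable {V E : Type*} {ends : E → Sym2 V} {α : Setoid V}

lemma connSetoid_le_iff {F : Set E} {T : Setoid (Quotient α)} :
    connSetoid ends α F ≤ T ↔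
      ∀ e ∈ F, ∀ x y : V, ends e = s(x, y) → T (Quotient.mk α x) (Quotient.mk α y) := by
  constructor
  · exact fun h e he x y hxy => h (Relation.EqvGen.rel _ _ ⟨e, he, by rw [hxy, Sym2.map_mk]⟩)
  · refine fun h => Setoid.eqvGen_le ?_
    rintro u v ⟨e, he, huv⟩
    induction hxy : ends e using Sym2.inductionOn with | _ x y
    rw [hxy, Sym2.map_mk, Sym2.eq_iff] at huv
    rcases huv with ⟨rfl, rfl⟩ | ⟨rfl, rfl⟩
    · exact h e he x y hxy
    · exact T.symm (h e he x y hxy)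

lemma connSetoid_mono {F F' : Set E} (h : F ⊆ F') :
    connSetoid ends α F ≤ connSetoid ends α F' :=
  connSetoid_le_iff.2 fun e he => connSetoid_le_iff.1 le_rfl e (h he)

lemma connSetoid_insert_of_endsConn {F : Set E} {e : E} (h : EndsConn ends α F e) :
    connSetoid ends α (insert e F) = connSetoid ends α F :=
  le_antisymm
    (connSetoid_le_iff.2 (Set.forall_mem_insert.2 ⟨h, connSetoid_le_iff.1 le_rfl⟩))
    (connSetoid_mono (Set.subset_insert e F))

lemma connSetoid_insert {F : Set E} {e : E} {x y : V} (hxy : ends e = s(x, y)) :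
    connSetoid ends α (insert e F) =
      mergeSetoid (connSetoid ends α F) (Quotient.mk α x) (Quotient.mk α y) := by
  refine eq_of_forall_ge_iff fun T => ?_
  rw [mergeSetoid_le_iff, connSetoid_le_iff, connSetoid_le_iff, Set.forall_mem_insert, and_comm]
  refine and_congr_right fun _ => ⟨fun h => h x y hxy, fun h x' y' hxy' => ?_⟩
  rcases Sym2.eq_iff.1 (hxy.symm.trans hxy') with ⟨rfl, rfl⟩ | ⟨rfl, rfl⟩
  · exact h
  · exact T.symm h

lemma exists_not_endsConn_empty [Nontrivial (Quotient α)]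
    (hconn : ∀ x y : Quotient α, Conn ends α Set.univ x y) :
    ∃ e, ¬ EndsConn ends α ∅ e := by
  by_contra! hloop
  obtain ⟨x, y, hxy⟩ := exists_pair_ne (Quotient α)
  have hempty : connSetoid ends α ∅ ≤ ⊥ := connSetoid_le_iff.2 (by simp)
  have huniv : connSetoid ends α Set.univ ≤ connSetoid ends α ∅ :=
    connSetoid_le_iff.2 fun e _ => hloop e
  exact hxy (hempty (huniv (hconn x y)))

lemma setOf_update_true (e : E) (ω : E → Bool) :
    {x | Function.update ω e true x = true} =
      insert e {x | Function.update ω e false x = true} := by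
  ext x
  by_cases hx : x = e <;> simp [hx]

lemma numComponents_update_true_of_endsConn {e : E} {ω : E → Bool}
    (h : EndsConn ends α {x | Function.update ω e false x = true} e) :
    numComponents ends α (Function.update ω e true) =
      numComponents ends α (Function.update ω e false) := by
  rw [numComponents, setOf_update_true, connSetoid_insert_of_endsConn h, numComponents]

lemma numComponents_update_true_add_one [Finite (Quotient α)] {e : E} {ω : E → Bool}
    (h : ¬ EndsConn ends α {x | Function.update ω e false x = true} e) :
    numComponents ends α (Function.update ω e true) + 1 =
      numComponents ends α (Function.update ω e false) := by
  simp only [EndsConn, not_forall] at h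
  obtain ⟨x, y, hxy, hnot⟩ := h
  rw [numComponents, setOf_update_true, connSetoid_insert hxy, numComponents]
  exact card_quotient_mergeSetoid_add_one hnot

end Components

section RandomCluster

variable {V E : Type*} {ends : E → Sym2 V} {α : Setoid V} {p q : ℝ}

lemma pPrime_mem_Ioo (hp : p ∈ Set.Ioo (0 : ℝ) 1) (hq : 0 < q) :
    pPrime p q ∈ Set.Ioo (0 : ℝ) 1 := by
  have hq' : 0 < q * (1 - p) := mul_pos hq (sub_pos.2 hp.2)
  have hden : 0 < p + q * (1 - p) := add_pos hp.1 hq'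
  exact ⟨div_pos hp.1 hden, (div_lt_one hden).2 (by linarith)⟩

lemma self_ne_pPrime (hp : p ∈ Set.Ioo (0 : ℝ) 1) (hq : 0 < q) (hq1 : q ≠ 1) :
    p ≠ pPrime p q := by
  have hp' : 0 < 1 - p := sub_pos.2 hp.2
  have hden : 0 < p + q * (1 - p) := add_pos hp.1 (mul_pos hq hp')
  rw [pPrime, ne_eq, eq_div_iff hden.ne']
  intro h
  have hzero : p * (1 - p) * (q - 1) = 0 := by linarith
  simp [hp.1.ne', hp'.ne', sub_eq_zero, hq1] at hzero

/-- The conditional probability under `φ^α_{G,p,q}` that `e` is open given the state in `ω` of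
all other edges; the state of `e` itself in `ω` is ignored. -/
def fkCondProb (ends : E → Sym2 V) (α : Setoid V) (p q : ℝ) (e : E) (ω : E → Bool) : ℝ :=
  if EndsConn ends α {x | Function.update ω e false x = true} e then p else pPrime p q

lemma fkCondProb_mem_Icc (e : E) (ω : E → Bool) :
    fkCondProb ends α p q e ω ∈ Set.Icc (min p (pPrime p q)) (max p (pPrime p q)) := by
  unfold fkCondProb
  split_ifs <;> simp

lemma exists_fkCondProb_eq (hcycle : ∃ e, EndsConn ends α {e' | e' ≠ e} e)
    (hloop : ∃ e, ¬ EndsConn ends α ∅ e) {c : ℝ} (hc : c = p ∨ c = pPrime p q) :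
    ∃ e ω, fkCondProb ends α p q e ω = c := by
  rcases hc with rfl | rfl
  · obtain ⟨e, he⟩ := hcycle
    have hopen : {x | Function.update (⊤ : E → Bool) e false x = true} = {e' | e' ≠ e} := by
      ext x
      by_cases hx : x = e <;> simp [hx]
    exact ⟨e, ⊤, if_pos (hopen ▸ he)⟩
  · obtain ⟨e, he⟩ := hloop
    have hclosed : {x | Function.update (⊥ : E → Bool) e false x = true} = ∅ := by
      ext x
      by_cases hx : x = e <;> simp [hx]
    exact ⟨e, ⊥, if_neg (hclosed ▸ he)⟩

variable [Fintype E]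

lemma fkWeight_eq_berWeight_mul (ω : E → Bool) :
    fkWeight ends α p q ω = berWeight (fun _ => p) ω * q ^ numComponents ends α ω := by
  rw [fkWeight, berWeight, Finset.prod_ite, Finset.prod_const, Finset.prod_const]
  simp

lemma fkWeight_pos (hp : p ∈ Set.Ioo (0 : ℝ) 1) (hq : 0 < q) (ω : E → Bool) :
    0 < fkWeight ends α p q ω := by
  have hp0 := hp.1
  have hp1 := sub_pos.2 hp.2
  unfold fkWeight
  positivity

lemma fkWeight_update_true [Finite (Quotient α)] (hp : p ∈ Set.Ioo (0 : ℝ) 1) (hq : 0 < q)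
    (e : E) (ω : E → Bool) :
    fkWeight ends α p q (Function.update ω e true) = fkCondProb ends α p q e ω *
      (fkWeight ends α p q (Function.update ω e true) +
        fkWeight ends α p q (Function.update ω e false)) := by
  have hber := one_sub_mul_berWeight_update_true (fun _ => p) e ω
  simp only [fkWeight_eq_berWeight_mul, fkCondProb]
  split_ifs with h
  · rw [numComponents_update_true_of_endsConn h]
    linear_combination q ^ numComponents ends α (Function.update ω e false) * hber
  · have hden : 0 < p + q * (1 - p) := add_pos hp.1 (mul_pos hq (sub_pos.2 hp.2))
    rw [← numComponents_update_true_add_one h, pPrime, div_mul_eq_mul_div, eq_div_iff hden.ne']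
    linear_combination q ^ (numComponents ends α (Function.update ω e true) + 1) * hber

lemma openExcess_fkWeight [Finite (Quotient α)] (hp : p ∈ Set.Ioo (0 : ℝ) 1) (hq : 0 < q)
    (t : ℝ) (e : E) (ω : E → Bool) :
    openExcess (fkWeight ends α p q) t e ω =
      (fkWeight ends α p q (Function.update ω e true) +
        fkWeight ends α p q (Function.update ω e false)) * (fkCondProb ends α p q e ω - t) := by
  rw [openExcess]
  linear_combination fkWeight_update_true (ends := ends) (α := α) hp hq e ω

lemma openExcess_fkWeight_pos_iff [Finite (Quotient α)] (hp : p ∈ Set.Ioo (0 : ℝ) 1) (hq : 0 < q)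
    {t : ℝ} {e : E} {ω : E → Bool} :
    0 < openExcess (fkWeight ends α p q) t e ω ↔ t < fkCondProb ends α p q e ω := by
  rw [openExcess_fkWeight hp hq, mul_pos_iff_of_pos_left, sub_pos]
  exact add_pos (fkWeight_pos hp hq _) (fkWeight_pos hp hq _)

lemma openExcess_fkWeight_neg_iff [Finite (Quotient α)] (hp : p ∈ Set.Ioo (0 : ℝ) 1) (hq : 0 < q)
    {t : ℝ} {e : E} {ω : E → Bool} :
    openExcess (fkWeight ends α p q) t e ω < 0 ↔ fkCondProb ends α p q e ω < t := by
  rw [openExcess_fkWeight hp hq, ← neg_pos, ← mul_neg, mul_pos_iff_of_pos_left, neg_sub, sub_pos]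
  exact add_pos (fkWeight_pos hp hq _) (fkWeight_pos hp hq _)

lemma openExcess_fkWeight_nonneg_iff [Finite (Quotient α)] (hp : p ∈ Set.Ioo (0 : ℝ) 1)
    (hq : 0 < q) {t : ℝ} {e : E} {ω : E → Bool} :
    0 ≤ openExcess (fkWeight ends α p q) t e ω ↔ t ≤ fkCondProb ends α p q e ω := by
  rw [← not_lt, openExcess_fkWeight_neg_iff hp hq, not_lt]

lemma openExcess_fkWeight_nonpos_iff [Finite (Quotient α)] (hp : p ∈ Set.Ioo (0 : ℝ) 1)
    (hq : 0 < q) {t : ℝ} {e : E} {ω : E → Bool} :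
    openExcess (fkWeight ends α p q) t e ω ≤ 0 ↔ fkCondProb ends α p q e ω ≤ t := by
  rw [← not_lt, openExcess_fkWeight_pos_iff hp hq, not_lt]

lemma massOf_fkWeight_univ_pos (hp : p ∈ Set.Ioo (0 : ℝ) 1) (hq : 0 < q) :
    0 < massOf (fkWeight ends α p q) Set.univ := by
  rw [massOf_univ]
  exact Finset.sum_pos (fun ω _ => fkWeight_pos hp hq ω) Finset.univ_nonempty

end RandomCluster

theorem enhanced_comparison_inequalities_general
    {V E : Type*} [Fintype E] (ends : E → Sym2 V) (α : Setoid V) [Finite (Quotient α)]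
    (hloop : ∃ e : E, ¬ EndsConn ends α ∅ e)
    (hcycle : ∃ e : E, EndsConn ends α {e' | e' ≠ e} e)
    (p q : ℝ) (hp : p ∈ Set.Ioo (0 : ℝ) 1) (hq : 0 < q) (hq1 : q ≠ 1) :
    ∃ ε ε' : E → ℝ,
      (∀ e, ε e ∈ Set.Icc (0 : ℝ) 1) ∧ (∀ e, ε' e ∈ Set.Icc (0 : ℝ) 1) ∧
      (∃ e, ε e ≠ 0) ∧ (∃ e, ε' e ≠ 0) ∧
      StochDom (berProb fun e => min p (pPrime p q) + ε e) (fkProb ends α p q) ∧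
      StochDom (fkProb ends α p q) (berProb fun e => max p (pPrime p q) - ε' e) := by
  have hp' : pPrime p q ∈ Set.Ioo (0 : ℝ) 1 := pPrime_mem_Ioo hp hq
  have hlt : min p (pPrime p q) < max p (pPrime p q) := min_lt_max.2 (self_ne_pPrime hp hq hq1)
  have hnonneg : ∀ ω, 0 ≤ fkWeight ends α p q ω := fun ω => (fkWeight_pos hp hq ω).le
  have hmass : 0 < massOf (fkWeight ends α p q) Set.univ := massOf_fkWeight_univ_pos hp hq
  obtain ⟨e₁, ω₁, h₁⟩ := exists_fkCondProb_eq hcycle hloop (max_choice p (pPrime p q))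
  obtain ⟨e₂, ω₂, h₂⟩ := exists_fkCondProb_eq hcycle hloop (min_choice p (pPrime p q))
  obtain ⟨ε, hε, hε_ne, hε_dom⟩ := exists_berProb_add_stochDom
    (s := fun _ => min p (pPrime p q)) hnonneg hmass
    (fun _ => ⟨le_min hp.1.le hp'.1.le, min_le_of_left_le hp.2.le⟩)
    (fun e ω => (openExcess_fkWeight_nonneg_iff hp hq).2 (fkCondProb_mem_Icc e ω).1)
    ⟨e₁, ω₁, (openExcess_fkWeight_pos_iff hp hq).2 (h₁ ▸ hlt)⟩
  obtain ⟨ε', hε', hε'_ne, hε'_dom⟩ := exists_stochDom_berProb_sub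
    (s := fun _ => max p (pPrime p q)) hnonneg hmass
    (fun _ => ⟨le_max_of_le_left hp.1.le, max_le hp.2.le hp'.2.le⟩)
    (fun e ω => (openExcess_fkWeight_nonpos_iff hp hq).2 (fkCondProb_mem_Icc e ω).2)
    ⟨e₂, ω₂, (openExcess_fkWeight_neg_iff hp hq).2 (h₂ ▸ hlt)⟩
  exact ⟨ε, ε', hε, hε', hε_ne, hε'_ne, hε_dom, hε'_dom⟩

/-- **Theorem 1.1 (Enhanced comparison inequalities).** -/
theorem enhanced_comparison_inequalities
    {V E : Type*} [Fintype V] [Fintype E]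
    (ends : E → Sym2 V) (α : Setoid V)
    (hconn : ∀ x y : Quotient α, Conn ends α Set.univ x y)
    (hnontriv : Nontrivial (Quotient α))
    (hcycle : ∃ e : E, EndsConn ends α {e' | e' ≠ e} e)
    (p q : ℝ) (hp : p ∈ Set.Ioo (0 : ℝ) 1) (hq : 0 < q) (hq1 : q ≠ 1) :
    ∃ ε ε' : E → ℝ,
      (∀ e, ε e ∈ Set.Icc (0 : ℝ) 1) ∧ (∀ e, ε' e ∈ Set.Icc (0 : ℝ) 1) ∧
      (∃ e, ε e ≠ 0) ∧ (∃ e, ε' e ≠ 0) ∧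
      StochDom (berProb fun e => min p (pPrime p q) + ε e) (fkProb ends α p q) ∧
      StochDom (fkProb ends α p q) (berProb fun e => max p (pPrime p q) - ε' e) := by
  exact enhanced_comparison_inequalities_general ends α (exists_not_endsConn_empty hconn) hcycle
    p q hp hq hq1

end FKPaper
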